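/- Let l ≥ 1, Y = {−1,+1}^l, p a conditional label distribution on Y, L̄ : Y × Y → [0,1] a multi-label loss, c_{y'} = ∑_{y∈Y} p(y)·L̄(y', y), and L_max = max_{y',y∈Y} L̄(y', y). For a centered score vector z on Y define the multi-label constrained exponential conditional error G(z) = ∑_{y'∈Y} c_{y'}·exp(z_{y'}). If ĥ ∈ Y satisfies z_{ĥ} = max_{y'∈Y} z_{y'}, then c_{ĥ} − min_{y'∈Y} c_{y'} ≤ 2·√( L_max · ( G(z) − inf_{z'} G(z') ) ), where the infimum is over all centered score vectors z' on Y. -/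

import Mathlib

noncomputable section
open Real

/-- Conditional cost `c_{y'} = ∑_y p(y) L̄(y', y)` of predicting the label vector `y'`. -/
def condCost {l : ℕ} (p : (Fin l → Bool) → ℝ)
    (L : (Fin l → Bool) → (Fin l → Bool) → ℝ) (y' : Fin l → Bool) : ℝ :=
  ∑ y, p y * L y' y

/-- The set of centered score vectors on `Y = {−1,+1}^l` (zero-sum constraint). -/
def centeredVecs (l : ℕ) : Set ((Fin l → Bool) → ℝ) :=
  {z | ∑ y', z y' = 0}

/-- Multi-label constrained exponential conditional error
`G(z) = ∑_{y'} c_{y'} exp(z_{y'})`. -/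
def GcstndExp {l : ℕ} (c : (Fin l → Bool) → ℝ) (z : (Fin l → Bool) → ℝ) : ℝ :=
  ∑ y', c y' * Real.exp (z y')

/-!
Let `k` maximize the centered score `z`. Transferring the amount `log t` of score from a label `j`
to `k` keeps `z` centered and changes the two exponential terms `a = c k * exp (z k)` and
`b = c j * exp (z j)` to `a * t` and `b * t⁻¹`. Optimizing over `t` shows that the regret is at
least `a + b - 2 * √(a * b) = (√a - √b) ^ 2`. If `c j < c k`, then `√a - √b` is at least
`√(c k) - √(c j)`, because `z k` is nonnegative and maximal; moreover
`c k - c j = (√(c k) + √(c j)) * (√(c k) - √(c j))`, and the first factor is at most `2 * √M` when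
the costs are at most `M`.
-/

theorem le_two_mul_sqrt_mul_of_forall_le_mul_add_mul_inv {a b m : ℝ} (ha : 0 ≤ a) (hb : 0 ≤ b)
    (h : ∀ t, 0 < t → m ≤ a * t + b * t⁻¹) : m ≤ 2 * √(a * b) := by
  rcases le_total m 0 with hm | hm
  · exact hm.trans (by positivity)
  have quadratic_nonneg (t : ℝ) : 0 ≤ a * (t * t) + -m * t + b := by
    rcases le_or_gt t 0 with ht | ht
    · nlinarith [mul_nonneg ha (mul_self_nonneg t), mul_nonneg hm (neg_nonneg.2 ht)]
    · have hmul : m * t ≤ (a * t + b * t⁻¹) * t := by gcongr; exact h t ht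
      rw [add_mul, inv_mul_cancel_right₀ ht.ne'] at hmul
      linarith
  have hdiscrim : m ^ 2 ≤ 4 * (a * b) := by
    have := discrim_le_zero quadratic_nonneg
    rw [discrim] at this
    linarith
  calc m ≤ √(2 ^ 2 * (a * b)) := le_sqrt_of_sq_le (by linarith)
    _ = 2 * √(a * b) := by rw [sqrt_mul (by positivity), sqrt_sq zero_le_two]

theorem sqrt_sub_sqrt_le_sqrt_mul_exp_sub_sqrt_mul_exp {a b u v : ℝ} (hb : 0 ≤ b) (hba : b ≤ a)
    (hu : 0 ≤ u) (hvu : v ≤ u) : √a - √b ≤ √(a * exp u) - √(b * exp v) := by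
  have hone : 1 ≤ √(exp u) := one_le_sqrt.2 (one_le_exp hu)
  calc √a - √b ≤ (√a - √b) * √(exp u) :=
        le_mul_of_one_le_right (sub_nonneg.2 (sqrt_le_sqrt hba)) hone
    _ = √(a * exp u) - √(b * exp u) := by
        rw [sqrt_mul (hb.trans hba), sqrt_mul hb, sub_mul]
    _ ≤ √(a * exp u) - √(b * exp v) := by gcongr

theorem sub_le_two_mul_sqrt_mul_of_sq_sqrt_sub_sqrt_le {a b M D : ℝ} (hb : 0 ≤ b) (hba : b ≤ a)
    (haM : a ≤ M) (hD : (√a - √b) ^ 2 ≤ D) : a - b ≤ 2 * √(M * D) := by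
  have ha : 0 ≤ a := hb.trans hba
  calc a - b = (√a + √b) * (√a - √b) := by rw [← sq_sub_sq, sq_sqrt ha, sq_sqrt hb]
    _ ≤ (√M + √M) * √D := by
        gcongr
        · exact sub_nonneg.2 (sqrt_le_sqrt hba)
        · exact hba.trans haM
        · exact le_sqrt_of_sq_le hD
    _ = 2 * √(M * D) := by rw [sqrt_mul (ha.trans haM)]; ring

section ExpRisk

variable {ι : Type*} [Fintype ι] {c z : ι → ℝ}

theorem nonneg_of_sum_eq_zero_of_forall_le (hz : ∑ i, z i = 0) {k : ι} (hk : ∀ i, z i ≤ z k) :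
    0 ≤ z k := by
  obtain ⟨i, -, hi⟩ := Finset.exists_le_of_sum_le (f := 0) (g := z)
    ⟨k, Finset.mem_univ k⟩ (by simp [hz])
  exact hi.trans (hk i)

/-- The conditional error of the score vector `z` under the exponential constrained loss, for
arbitrary costs `c` on a finite set of labels; on `Fin l → Bool` it is `GcstndExp`. -/
def expRisk (c z : ι → ℝ) : ℝ :=
  ∑ i, c i * exp (z i)

/-- The conditional regret of `z`: the excess of its exponential conditional error over the best
value attained by centered score vectors. The infimum is meaningful when `c` is nonnegative, which
makes the errors bounded below. -/
def expRegret (c z : ι → ℝ) : ℝ :=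
  expRisk c z - sInf (expRisk c '' {w | ∑ i, w i = 0})

theorem expRisk_nonneg (hc : ∀ i, 0 ≤ c i) (z : ι → ℝ) : 0 ≤ expRisk c z :=
  Finset.sum_nonneg fun i _ => mul_nonneg (hc i) (exp_nonneg _)

theorem expRisk_add_single [DecidableEq ι] (c z : ι → ℝ) (k : ι) (s : ℝ) :
    expRisk c (z + Pi.single k s) = expRisk c z + c k * exp (z k) * (exp s - 1) := by
  rw [← sub_eq_iff_eq_add', expRisk, expRisk, ← Finset.sum_sub_distrib, Fintype.sum_eq_single k]
  · simp only [Pi.add_apply, Pi.single_eq_same, exp_add]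
    ring
  · intro i hi
    simp [hi]

theorem expRisk_sub_le_expRegret (hc : ∀ i, 0 ≤ c i) {w : ι → ℝ} (hw : ∑ i, w i = 0) :
    expRisk c z - expRisk c w ≤ expRegret c z :=
  have hbdd : BddBelow (expRisk c '' {v | ∑ i, v i = 0}) :=
    ⟨0, Set.forall_mem_image.2 fun v _ => expRisk_nonneg hc v⟩
  sub_le_sub_left (csInf_le hbdd ⟨w, hw, rfl⟩) _

theorem add_sub_mul_add_mul_inv_le_expRegret (hc : ∀ i, 0 ≤ c i) (hz : ∑ i, z i = 0) {j k : ι}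
    (hjk : j ≠ k) {t : ℝ} (ht : 0 < t) :
    c k * exp (z k) + c j * exp (z j) - (c k * exp (z k) * t + c j * exp (z j) * t⁻¹)
      ≤ expRegret c z := by
  classical
  let w := z + Pi.single k (log t) + Pi.single j (-log t)
  have hw : ∑ i, w i = 0 := by simp [w, Finset.sum_add_distrib, hz]
  have hrisk : expRisk c w
      = expRisk c z + c k * exp (z k) * (t - 1) + c j * exp (z j) * (t⁻¹ - 1) := by
    simp only [w, expRisk_add_single, Pi.add_apply, Pi.single_eq_of_ne hjk, add_zero, exp_neg,
      exp_log ht]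
  linarith [expRisk_sub_le_expRegret (z := z) hc hw]

theorem sq_sqrt_sub_sqrt_le_expRegret (hc : ∀ i, 0 ≤ c i) (hz : ∑ i, z i = 0) {j k : ι}
    (hjk : j ≠ k) : (√(c k * exp (z k)) - √(c j * exp (z j))) ^ 2 ≤ expRegret c z := by
  have hterm (i : ι) : 0 ≤ c i * exp (z i) := mul_nonneg (hc i) (exp_nonneg _)
  have hamgm : c k * exp (z k) + c j * exp (z j) - expRegret c z
      ≤ 2 * √(c k * exp (z k) * (c j * exp (z j))) :=
    le_two_mul_sqrt_mul_of_forall_le_mul_add_mul_inv (hterm k) (hterm j) fun t ht =>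
      sub_le_comm.1 (add_sub_mul_add_mul_inv_le_expRegret hc hz hjk ht)
  rw [sqrt_mul (hterm k)] at hamgm
  rw [sub_sq, sq_sqrt (hterm k), sq_sqrt (hterm j)]
  linarith

theorem sub_le_two_mul_sqrt_mul_expRegret {M : ℝ} (hc : ∀ i, c i ∈ Set.Icc 0 M)
    (hz : ∑ i, z i = 0) {j k : ι} (hk : 0 ≤ z k) (hjk : z j ≤ z k) :
    c k - c j ≤ 2 * √(M * expRegret c z) := by
  rcases le_or_gt (c k) (c j) with hle | hlt
  · exact (sub_nonpos.2 hle).trans (by positivity)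
  have hne : j ≠ k := fun h => hlt.ne (congrArg c h)
  refine sub_le_two_mul_sqrt_mul_of_sq_sqrt_sub_sqrt_le (hc j).1 hlt.le (hc k).2 ?_
  calc (√(c k) - √(c j)) ^ 2
      ≤ (√(c k * exp (z k)) - √(c j * exp (z j))) ^ 2 :=
        pow_le_pow_left₀ (sub_nonneg.2 (sqrt_le_sqrt hlt.le))
          (sqrt_sub_sqrt_le_sqrt_mul_exp_sub_sqrt_mul_exp (hc j).1 hlt.le hk hjk) 2
    _ ≤ expRegret c z := sq_sqrt_sub_sqrt_le_expRegret (fun i => (hc i).1) hz hne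

theorem cstnd_bound_exponential_general {M : ℝ} (hc : ∀ i, c i ∈ Set.Icc 0 M)
    (hz : ∑ i, z i = 0) {k : ι} (hk : ∀ i, z i ≤ z k) :
    c k - ⨅ i, c i ≤ 2 * √(M * expRegret c z) := by
  have : Nonempty ι := ⟨k⟩
  have hk_nonneg : 0 ≤ z k := nonneg_of_sum_eq_zero_of_forall_le hz hk
  exact sub_le_comm.1 <| le_ciInf fun j =>
    sub_le_comm.1 <| sub_le_two_mul_sqrt_mul_expRegret hc hz hk_nonneg (hk j)

end ExpRisk

theorem condCost_mem_Icc {l : ℕ} {p : (Fin l → Bool) → ℝ} (hp0 : ∀ y, 0 ≤ p y)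
    (hp1 : ∑ y, p y = 1) {L : (Fin l → Bool) → (Fin l → Bool) → ℝ} {y' : Fin l → Bool} {a b : ℝ}
    (hL : ∀ y, L y' y ∈ Set.Icc a b) : condCost p L y' ∈ Set.Icc a b :=
  (convex_Icc a b).sum_mem (fun y _ => hp0 y) hp1 fun y _ => hL y

theorem cstnd_bound_exponential (l : ℕ) (hl : 1 ≤ l)
    (p : (Fin l → Bool) → ℝ) (hp0 : ∀ y, 0 ≤ p y) (hp1 : ∑ y, p y = 1)
    (L : (Fin l → Bool) → (Fin l → Bool) → ℝ)
    (hL : ∀ y' y, L y' y ∈ Set.Icc (0 : ℝ) 1)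
    (z : (Fin l → Bool) → ℝ) (hz : z ∈ centeredVecs l)
    (hhat : Fin l → Bool) (hmax : ∀ y', z y' ≤ z hhat) :
    condCost p L hhat - ⨅ y' : Fin l → Bool, condCost p L y'
      ≤ 2 * Real.sqrt ((⨆ y' : Fin l → Bool, ⨆ y : Fin l → Bool, L y' y) *
          (GcstndExp (condCost p L) z
            - sInf ((fun z' => GcstndExp (condCost p L) z') '' centeredVecs l))) := by
  have hbdd := (Set.finite_iUnion fun y' => Set.finite_range (L y')).bddAbove
  exact cstnd_bound_exponential_general
    (fun y' => condCost_mem_Icc hp0 hp1 fun y => ⟨(hL y' y).1, le_ciSup₂ hbdd y' y⟩) hz hmax
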